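/- arXiv:0903.4969 — 2 statements merged into one kernel-verified Lean document; each statement's English description precedes it below -/
import Mathlib

section
/- In 𝔽₂[t₁,…,t₇], the product ∏_{1≤j<k≤7} (1 + t_j + t_k) is congruent to (1 + e₄ + e₆ + e₇)³ modulo the ideal generated by e₁, e₂, e₃, e₅. -/
open MvPolynomial Finset

/-- The `i`-th elementary symmetric polynomial in `𝔽₂[t₁,…,t₇]`. -/
noncomputable def e (i : ℕ) : MvPolynomial (Fin 7) (ZMod 2) :=
  esymm (Fin 7) (ZMod 2) i

/-- In characteristic two, the product over all ordered pairs is a square. -/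
lemma sq_prod_pairs {K : Type*} [CommRing K] [CharP K 2] (τ : Fin 7 → K) :
    (∏ p ∈ univ.filter (fun p : Fin 7 × Fin 7 => p.1 < p.2), (1 + τ p.1 + τ p.2)) ^ 2
      = ∏ j, ∏ k, (1 + τ j + τ k) := by
  rw [← Fintype.prod_prod_type' (f := fun j k => 1 + τ j + τ k),
    ← Finset.prod_filter_mul_prod_filter_not univ (fun p : Fin 7 × Fin 7 => p.1 < p.2),
    ← Finset.prod_filter_mul_prod_filter_not
      (univ.filter (fun p : Fin 7 × Fin 7 => ¬ p.1 < p.2)) (fun p => p.2 < p.1), sq]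
  congr 1
  have h1 : ∏ p ∈ (univ.filter (fun p : Fin 7 × Fin 7 => ¬ p.1 < p.2)).filter
      (fun p => ¬ p.2 < p.1), (1 + τ p.1 + τ p.2) = 1 := by
    apply Finset.prod_eq_one
    intro p hp
    simp only [Finset.mem_filter, not_lt] at hp
    have : p.1 = p.2 := le_antisymm hp.2 hp.1.2
    rw [this, add_assoc, CharTwo.add_self_eq_zero, add_zero]
  rw [h1, mul_one]
  refine Finset.prod_bij' (fun p _ => p.swap) (fun p _ => p.swap) ?_ ?_ ?_ ?_ ?_
  · intro p hp
    simp only [Finset.mem_filter, Finset.mem_univ, true_and, Prod.fst_swap, Prod.snd_swap] at hp ⊢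
    exact ⟨not_lt.2 hp.le, hp⟩
  · intro p hp
    simp only [Finset.mem_filter, Finset.mem_univ, true_and, Prod.fst_swap, Prod.snd_swap] at hp ⊢
    exact hp.2
  · intro p _; simp
  · intro p _; simp
  · intro p _; simp only [Prod.fst_swap, Prod.snd_swap]; ring

/-- The product over pairs is symmetric: its square is, and squaring is injective. -/
lemma pairs_symm : (∏ p ∈ univ.filter (fun p : Fin 7 × Fin 7 => p.1 < p.2),
    (1 + X p.1 + X p.2) : MvPolynomial (Fin 7) (ZMod 2)).IsSymmetric := by
  intro s
  apply CharTwo.sq_injective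
  simp only
  rw [← map_pow, sq_prod_pairs (fun i => (X i : MvPolynomial (Fin 7) (ZMod 2)))]
  simp only [map_prod, map_add, map_one, rename_X]
  rw [Equiv.prod_comp s (fun j => ∏ k, (1 + X j + X (s k) : MvPolynomial (Fin 7) (ZMod 2)))]
  refine Finset.prod_congr rfl fun j _ => ?_
  exact Equiv.prod_comp s (fun k => (1 + X j + X k : MvPolynomial (Fin 7) (ZMod 2)))

lemma exists_roots {K : Type*} [Field K] [CharP K 2] [IsAlgClosed K] (a b d : K) :
    ∃ τ : Fin 7 → K, ∏ i, (Polynomial.X + Polynomial.C (τ i)) =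
      Polynomial.X ^ 7 + Polynomial.C a * Polynomial.X ^ 3 + Polynomial.C b * Polynomial.X
        + Polynomial.C d := by
  set f : Polynomial K := Polynomial.X ^ 7 + Polynomial.C a * Polynomial.X ^ 3
    + Polynomial.C b * Polynomial.X + Polynomial.C d with hf
  have hd : f.natDegree = 7 := by rw [hf]; compute_degree!
  have hm : f.Monic := by rw [hf]; monicity!
  have hs := IsAlgClosed.splits f
  have hc : f.roots.toList.length = 7 := by
    rw [Multiset.length_toList, ← hs.natDegree_eq_card_roots, hd]
  refine ⟨fun i => f.roots.toList.get (i.cast hc.symm), ?_⟩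
  have h := hs.eq_prod_roots_of_monic hm
  refine Eq.trans ?_ h.symm
  conv_rhs => rw [← Multiset.coe_toList f.roots, Multiset.map_coe, Multiset.prod_coe]
  rw [← List.prod_ofFn]
  congr 1
  apply List.ext_get
  · simp [hs.natDegree_eq_card_roots.symm, hd]
  · intro n h1 h2
    have : CharP (Polynomial K) 2 := inferInstance
    simp [CharTwo.sub_eq_add, -List.ofFn_succ]

lemma esymm_values {K : Type*} [Field K] [CharP K 2] [Algebra (ZMod 2) K] (a b d : K)
    (τ : Fin 7 → K) (h : ∏ i, (Polynomial.X + Polynomial.C (τ i)) =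
      Polynomial.X ^ 7 + Polynomial.C a * Polynomial.X ^ 3 + Polynomial.C b * Polynomial.X
        + Polynomial.C d) (i : Fin 7) :
    aeval τ (esymm (Fin 7) (ZMod 2) (i + 1)) = (![0, 0, 0, a, 0, b, d] : Fin 7 → K) i := by
  have h2 := Finset.prod_X_add_C_coeff (univ : Finset (Fin 7)) τ (k := 6 - i) (by simp; omega)
  rw [h] at h2
  have h3 : aeval τ (esymm (Fin 7) (ZMod 2) (i + 1)) =
      ∑ t ∈ powersetCard (i + 1) univ, ∏ i ∈ t, τ i := by
    simp [esymm]
  have h4 : #(univ : Finset (Fin 7)) - (6 - (i : ℕ)) = i + 1 := by simp; omega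
  rw [h4] at h2
  rw [h3, ← h2]
  fin_cases i <;> simp [Polynomial.coeff_X, Polynomial.coeff_C, Polynomial.coeff_X_pow]

lemma field_identity {K : Type*} [Field K] [CharP K 2] (a b d : K)
    (hc : 1 + a + b + d ≠ 0)
    (τ : Fin 7 → K) (h : ∏ i, (Polynomial.X + Polynomial.C (τ i)) =
      Polynomial.X ^ 7 + Polynomial.C a * Polynomial.X ^ 3 + Polynomial.C b * Polynomial.X
        + Polynomial.C d) :
    ∏ p ∈ univ.filter (fun p : Fin 7 × Fin 7 => p.1 < p.2), (1 + τ p.1 + τ p.2)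
      = (1 + a + b + d) ^ 3 := by
  have ev : ∀ x : K, ∏ i, (x + τ i) = x ^ 7 + a * x ^ 3 + b * x + d := by
    intro x
    have := congrArg (Polynomial.eval x) h
    simpa [Polynomial.eval_prod] using this
  have h1 : ∏ i, (1 + τ i) = 1 + a + b + d := by rw [ev]; ring
  have h2 : (2 : K) = 0 := CharTwo.two_eq_zero
  have root : ∀ j, τ j ^ 7 + a * τ j ^ 3 + b * τ j + d = 0 := by
    intro j
    rw [← ev]
    exact Finset.prod_eq_zero (Finset.mem_univ j) (CharTwo.add_self_eq_zero _)
  have h3 : ∀ j, (1 + τ j) * ∏ k, (1 + τ j + τ k) = 1 + a + b + d := by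
    intro j
    have r := root j
    rw [ev]
    generalize τ j = x at r ⊢
    grind
  have h4 : (1 + a + b + d) * ∏ j, ∏ k, (1 + τ j + τ k) = (1 + a + b + d) ^ 7 := by
    rw [← h1, ← Finset.prod_mul_distrib, h1]
    simp [h3]
  rw [← sq_prod_pairs] at h4
  apply CharTwo.sq_injective
  apply mul_left_cancel₀ hc
  simp only
  rw [h4]; ring

/-- The truncation killing the variables `X 0, X 1, X 2, X 4`. -/
noncomputable def trunc :
    MvPolynomial (Fin 7) (ZMod 2) →ₐ[ZMod 2] MvPolynomial (Fin 7) (ZMod 2) :=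
  aeval ![0, 0, 0, X 3, 0, X 5, X 6]

lemma sub_trunc_mem (q : MvPolynomial (Fin 7) (ZMod 2)) :
    q - trunc q ∈ Ideal.span {X 0, X 1, X 2, (X 4 : MvPolynomial (Fin 7) (ZMod 2))} := by
  set J := Ideal.span {X 0, X 1, X 2, (X 4 : MvPolynomial (Fin 7) (ZMod 2))} with hJ
  have : (Ideal.Quotient.mkₐ (ZMod 2) J) = (Ideal.Quotient.mkₐ (ZMod 2) J).comp trunc := by
    apply MvPolynomial.algHom_ext
    intro i
    simp only [AlgHom.comp_apply, Ideal.Quotient.mkₐ_eq_mk, trunc, aeval_X]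
    rw [Ideal.Quotient.eq]
    fin_cases i <;> simp <;> exact Ideal.subset_span (by simp)
  have h := DFunLike.congr_fun this q
  simpa only [AlgHom.comp_apply, Ideal.Quotient.mkₐ_eq_mk, Ideal.Quotient.eq] using h

/-- in `𝔽₂[t₁,…,t₇]`, `∏_{1≤j<k≤7} (1 + t_j + t_k)` is congruent
to `(1 + e₄ + e₆ + e₇)³` modulo the ideal `(e₁, e₂, e₃, e₅)`. -/
theorem lambda2_spin7 :
    (∏ p ∈ univ.filter (fun p : Fin 7 × Fin 7 => p.1 < p.2),
        (1 + X p.1 + X p.2) : MvPolynomial (Fin 7) (ZMod 2))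
      - (1 + e 4 + e 6 + e 7) ^ 3 ∈ Ideal.span {e 1, e 2, e 3, e 5} := by
  obtain ⟨q, hq⟩ := esymmAlgHom_surjective (σ := Fin 7) (ZMod 2) (n := 7) (by simp)
    ⟨_, pairs_symm⟩
  have hq := congrArg Subtype.val hq
  rw [esymmAlgHom_apply] at hq
  simp only at hq
  let B := MvPolynomial (Fin 7) (ZMod 2)
  let K := AlgebraicClosure (FractionRing B)
  let ι : B →ₐ[ZMod 2] K := IsScalarTower.toAlgHom (ZMod 2) B K
  have hι : Function.Injective ι := by
    change Function.Injective (algebraMap B K)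
    rw [IsScalarTower.algebraMap_eq B (FractionRing B) K]
    exact (algebraMap (FractionRing B) K).injective.comp (IsFractionRing.injective B _)
  have : CharP K 2 := charP_of_injective_algebraMap (algebraMap (ZMod 2) K).injective 2
  have hc : 1 + ι (X 3) + ι (X 5) + ι (X 6) ≠ 0 := by
    intro h0
    have h1 : ι (1 + X 3 + X 5 + X 6) = ι 0 := by simpa using h0
    have h2 := congrArg (aeval (fun _ => (0 : ZMod 2))) (hι h1)
    simp at h2
  obtain ⟨τ, hτ⟩ := exists_roots (ι (X 3)) (ι (X 5)) (ι (X 6))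
  have key := field_identity _ _ _ hc τ hτ
  have comm : (aeval τ).comp (aeval (fun i : Fin 7 => esymm (Fin 7) (ZMod 2) (i + 1)))
      = ι.comp trunc := by
    apply MvPolynomial.algHom_ext
    intro i
    simp only [AlgHom.comp_apply, aeval_X, trunc]
    rw [esymm_values _ _ _ τ hτ i]
    fin_cases i <;> simp
  have h5 := DFunLike.congr_fun comm q
  simp only [AlgHom.comp_apply] at h5
  rw [hq] at h5
  simp only [map_prod, map_add, map_one, aeval_X] at h5
  rw [key] at h5
  have h6 : trunc q = (1 + X 3 + X 5 + X 6) ^ 3 := by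
    apply hι
    rw [← h5]; simp
  have h7 := Ideal.mem_map_of_mem
    (aeval (fun i : Fin 7 => esymm (Fin 7) (ZMod 2) (i + 1))) (sub_trunc_mem q)
  rw [h6, map_sub, hq, Ideal.map_span] at h7
  simpa [Set.image_insert_eq, e] using h7
end

section
/- In 𝔽₂[t₁,…,t₇], let Q be the product over all subsets S of {1,…,7} of even positive cardinality (|S| = 2, 4, or 6) of (1 + Σ_{i∈S} t_i). Then the homogeneous component of Q of degree 32 is congruent to e₃e₅³e₇² + e₅⁵e₇ + e₅⁴e₆² + e₂³e₅e₇³ + e₂²e₃e₅e₆e₇² + e₂²e₄e₅²e₇² + e₂²e₅³e₆e₇ + e₂e₃³e₇³ + e₃⁴e₆e₇² + e₃³e₄e₅e₇² + e₃³e₅²e₆e₇ + e₂⁴e₃e₇³ + e₂⁴e₅²e₇² + e₂⁴e₆⁴ + e₂³e₃e₄e₅e₇² + e₂³e₃e₅²e₆e₇ + e₂²e₃³e₅e₇² + e₂²e₃³e₆²e₇ + e₂²e₃²e₄²e₇² + e₂²e₃²e₄e₅e₆e₇ + e₂²e₃²e₅³e₇ + e₂²e₃²e₅²e₆² + e₂e₃⁴e₄e₇²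 + e₂e₃⁴e₅e₆e₇ + e₃⁶e₇² + e₃⁵e₄e₆e₇ + e₃⁴e₄²e₅e₇ + e₃⁴e₄²e₆² + e₃⁴e₅⁴ + e₄⁸ + e₂¹⁶ modulo the ideal generated by e₁. -/
open MvPolynomial Finset

/-- `Q`: the product over all subsets `S ⊆ {1,…,7}` of even positive
cardinality (`|S| = 2, 4, 6`) of `(1 + Σ_{i∈S} t_i)` in `𝔽₂[t₁,…,t₇]`,
representing the mod 2 total Chern class of
`1 ⊕ λ² ⊕ λ⁴ ⊕ λ⁶ = r̃₇*((Δ₁₄⁺)_ℂ)` of `SU(7)`. -/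
noncomputable def Q : MvPolynomial (Fin 7) (ZMod 2) :=
  ∏ s ∈ (univ : Finset (Fin 7)).powerset.filter
      (fun s => s.card ≠ 0 ∧ Even s.card),
    (1 + ∑ i ∈ s, X i)


namespace Polynomial

def gW {A : Type*} [CommRing A] (e2 e3 e4 e5 e6 e7 : A) (v : Fin 7 → A) : Fin 7 → A :=
  ![v 3 ^ 2 * (e7) + v 4 ^ 2 * (e2*e7) + v 5 ^ 2 * (e4*e7 + e2^2*e7) + v 6 ^ 2 * (e6*e7 + e3^2*e7 + e2^3*e7),
    v 0 ^ 2 + v 3 ^ 2 * (e6) + v 4 ^ 2 * (e2*e6) + v 5 ^ 2 * (e4*e6 + e3*e7 + e2^2*e6) + v 6 ^ 2 * (e6^2 + e5*e7 + e3^2*e6 + e2^3*e6),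
    v 3 ^ 2 * (e5) + v 4 ^ 2 * (e7 + e2*e5) + v 5 ^ 2 * (e4*e5 + e3*e6 + e2*e7 + e2^2*e5) + v 6 ^ 2 * (e4*e7 + e3^2*e5 + e2^2*e7 + e2^3*e5),
    v 1 ^ 2 + v 3 ^ 2 * (e4) + v 4 ^ 2 * (e6 + e2*e4) + v 5 ^ 2 * (e4^2 + e3*e5 + e2*e6 + e2^2*e4) + v 6 ^ 2 * (e5^2 + e3*e7 + e3^2*e4 + e2^2*e6 + e2^3*e4),
    v 3 ^ 2 * (e3) + v 4 ^ 2 * (e5 + e2*e3) + v 5 ^ 2 * (e7 + e2*e5 + e2^2*e3) + v 6 ^ 2 * (e3^3 + e2*e7 + e2^2*e5 + e2^3*e3),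
    v 2 ^ 2 + v 3 ^ 2 * (e2) + v 4 ^ 2 * (e4 + e2^2) + v 5 ^ 2 * (e6 + e3^2 + e2^3) + v 6 ^ 2 * (e4^2 + e2*e3^2 + e2^2*e4 + e2^4),
    v 4 ^ 2 * (e3) + v 5 ^ 2 * (e5) + v 6 ^ 2 * (e7 + e2^2*e3)]

noncomputable def gPoly {A : Type*} [CommRing A] (e2 e3 e4 e5 e6 e7 : A) : A[X] :=
  X^8 + C e2 * X^6 + C e3 * X^5 + C e4 * X^4 + C e5 * X^3 + C e6 * X^2 + C e7 * X

lemma gStep {A : Type*} [CommRing A] [CharP A 2] (e2 e3 e4 e5 e6 e7 : A) (v : Fin 7 → A) (y : A[X])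
    (h : gPoly e2 e3 e4 e5 e6 e7 ∣ y - ∑ j : Fin 7, C (v j) * X ^ (j.val + 1)) :
    gPoly e2 e3 e4 e5 e6 e7 ∣
      y ^ 2 - ∑ j : Fin 7, C (gW e2 e3 e4 e5 e6 e7 v j) * X ^ (j.val + 1) := by
  obtain ⟨q, hq⟩ := h
  refine ⟨gPoly e2 e3 e4 e5 e6 e7 * q ^ 2 + C (v 3) ^ 2 
    + C (v 4) ^ 2 * (C (1) * X^2 + C (e2) * X^0)
    + C (v 5) ^ 2 * (C (1) * X^4 + C (e2) * X^2 + C (e3) * X^1 + C (e4 + e2^2) * X^0)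
    + C (v 6) ^ 2 * (C (1) * X^6 + C (e2) * X^4 + C (e3) * X^3 + C (e4 + e2^2) * X^2 + C (e5) * X^1 + C (e6 + e3^2 + e2^3) * X^0), ?_⟩
  have hy : y = gPoly e2 e3 e4 e5 e6 e7 * q + ∑ j : Fin 7, C (v j) * X ^ (j.val + 1) := by
    rw [← hq]; ring
  have hsq : ∀ a b : A[X], (a + b) ^ 2 = a ^ 2 + b ^ 2 := fun a b => CharTwo.add_sq a b
  rw [hy]
  simp only [Fin.sum_univ_seven, gW, hsq, mul_pow]
  simp [gPoly]
  generalize (X : A[X]) = x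
  generalize C e2 = e2
  generalize C e3 = e3
  generalize C e4 = e4
  generalize C e5 = e5
  generalize C e6 = e6
  generalize C e7 = e7
  generalize C (v 0) = v0
  generalize C (v 1) = v1
  generalize C (v 2) = v2
  generalize C (v 3) = v3
  generalize C (v 4) = v4
  generalize C (v 5) = v5
  generalize C (v 6) = v6
  grind

/-- the displayed polynomial -/
def gP {A : Type*} [CommRing A] (e2 e3 e4 e5 e6 e7 : A) : A :=
  e3 * e5 ^ 3 * e7 ^ 2
    + e5 ^ 5 * e7
    + e5 ^ 4 * e6 ^ 2
    + e2 ^ 3 * e5 * e7 ^ 3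
    + e2 ^ 2 * e3 * e5 * e6 * e7 ^ 2
    + e2 ^ 2 * e4 * e5 ^ 2 * e7 ^ 2
    + e2 ^ 2 * e5 ^ 3 * e6 * e7
    + e2 * e3 ^ 3 * e7 ^ 3
    + e3 ^ 4 * e6 * e7 ^ 2
    + e3 ^ 3 * e4 * e5 * e7 ^ 2
    + e3 ^ 3 * e5 ^ 2 * e6 * e7
    + e2 ^ 4 * e3 * e7 ^ 3
    + e2 ^ 4 * e5 ^ 2 * e7 ^ 2
    + e2 ^ 4 * e6 ^ 4
    + e2 ^ 3 * e3 * e4 * e5 * e7 ^ 2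
    + e2 ^ 3 * e3 * e5 ^ 2 * e6 * e7
    + e2 ^ 2 * e3 ^ 3 * e5 * e7 ^ 2
    + e2 ^ 2 * e3 ^ 3 * e6 ^ 2 * e7
    + e2 ^ 2 * e3 ^ 2 * e4 ^ 2 * e7 ^ 2
    + e2 ^ 2 * e3 ^ 2 * e4 * e5 * e6 * e7
    + e2 ^ 2 * e3 ^ 2 * e5 ^ 3 * e7
    + e2 ^ 2 * e3 ^ 2 * e5 ^ 2 * e6 ^ 2
    + e2 * e3 ^ 4 * e4 * e7 ^ 2
    + e2 * e3 ^ 4 * e5 * e6 * e7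
    + e3 ^ 6 * e7 ^ 2
    + e3 ^ 5 * e4 * e6 * e7
    + e3 ^ 4 * e4 ^ 2 * e5 * e7
    + e3 ^ 4 * e4 ^ 2 * e6 ^ 2
    + e3 ^ 4 * e5 ^ 4
    + e4 ^ 8
    + e2 ^ 16

/-- a determinant -/
def gD {A : Type*} [CommRing A] (e2 e3 : A) (a b : Fin 7 → A) : A :=
  e3 * (a 5 * b 6 + a 6 * b 5) + e2 * (a 4 * b 6 + a 6 * b 4)

set_option maxHeartbeats 4000000 in
/-- the determinant certificate -/
lemma gCert {A : Type*} [CommRing A] [CharP A 2] (e2 e3 e4 e5 e6 e7 : A)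
    (a b c : Fin 7 → A)
    (ha : a = gW e2 e3 e4 e5 e6 e7 ![e7, e6, e5, e4, e3, e2, 0])
    (hb : b = gW e2 e3 e4 e5 e6 e7 a)
    (hc : c = gW e2 e3 e4 e5 e6 e7 b) :
    gD e2 e3 a b * gP e2 e3 e4 e5 e6 e7 = gD e2 e3 a c := by
  have hsq : ∀ a b : A, (a + b) ^ 2 = a ^ 2 + b ^ 2 := fun a b => CharTwo.add_sq a b
  obtain ⟨m, hm⟩ : ∃ m : ℕ → ℕ → ℕ → ℕ → ℕ → ℕ → A, ∀ i j k l n o : ℕ,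
      m i j k l n o = e2 ^ i * e3 ^ j * e4 ^ k * e5 ^ l * e6 ^ n * e7 ^ o :=
    ⟨fun i j k l n o => _, fun i j k l n o => rfl⟩
  have a1 : a 1 =
      m 0 0 0 0 0 2
      + m 0 0 2 0 1 0
      + m 1 2 0 0 1 0
      + m 2 0 1 0 1 0
      + m 2 1 0 0 0 1
      + m 4 0 0 0 1 0 := by
    simp only [ha, gW, Matrix.cons_val]
    clear ha hb hc
    simp only [hsq, hm, mul_pow, ← pow_mul]
    grind
  have a2 : a 2 =
      m 0 0 2 1 0 0
      + m 0 2 0 0 0 1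
      + m 1 2 0 1 0 0
      + m 2 0 1 1 0 0
      + m 2 1 0 0 1 0
      + m 3 0 0 0 0 1
      + m 4 0 0 1 0 0 := by
    simp only [ha, gW, Matrix.cons_val]
    clear ha hb hc
    simp only [hsq, hm, mul_pow, ← pow_mul]
    grind
  have a3 : a 3 =
      m 0 0 0 0 2 0
      + m 0 0 3 0 0 0
      + m 0 2 0 0 1 0
      + m 1 2 1 0 0 0
      + m 2 0 2 0 0 0
      + m 2 1 0 1 0 0
      + m 3 0 0 0 1 0
      + m 4 0 1 0 0 0 := by
    simp only [ha, gW, Matrix.cons_val]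
    clear ha hb hc
    simp only [hsq, hm, mul_pow, ← pow_mul]
    grind
  have a4 : a 4 =
      m 0 1 2 0 0 0
      + m 0 2 0 1 0 0
      + m 1 3 0 0 0 0
      + m 2 0 0 0 0 1
      + m 3 0 0 1 0 0
      + m 4 1 0 0 0 0 := by
    simp only [ha, gW, Matrix.cons_val]
    clear ha hb hc
    simp only [hsq, hm, mul_pow, ← pow_mul]
    grind
  have a5 : a 5 =
      m 0 0 0 2 0 0
      + m 0 2 1 0 0 0
      + m 1 0 2 0 0 0
      + m 2 0 0 0 1 0
      + m 5 0 0 0 0 0 := by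
    simp only [ha, gW, Matrix.cons_val]
    clear ha hb hc
    simp only [hsq, hm, mul_pow, ← pow_mul]
    grind
  have a6 : a 6 =
      m 0 3 0 0 0 0
      + m 2 0 0 1 0 0 := by
    simp only [ha, gW, Matrix.cons_val]
    clear ha hb hc
    simp only [hsq, hm, mul_pow, ← pow_mul]
    grind
  have b2 : b 2 =
      m 0 0 0 1 4 0
      + m 0 0 1 5 0 0
      + m 0 0 6 1 0 0
      + m 0 1 0 4 1 0
      + m 0 2 4 0 0 1
      + m 0 4 0 1 2 0
      + m 0 4 0 2 0 1
      + m 0 4 3 1 0 0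
      + m 0 5 2 0 1 0
      + m 0 6 1 0 0 1
      + m 0 8 0 1 0 0
      + m 1 0 0 4 0 1
      + m 1 2 4 1 0 0
      + m 1 4 0 3 0 0
      + m 1 4 2 0 0 1
      + m 2 0 0 5 0 0
      + m 2 0 5 1 0 0
      + m 2 1 4 0 1 0
      + m 3 0 4 0 0 1
      + m 4 0 0 0 0 3
      + m 4 0 1 1 2 0
      + m 4 0 1 2 0 1
      + m 4 1 0 0 3 0
      + m 5 0 0 0 2 1
      + m 5 0 0 1 0 2
      + m 8 0 2 1 0 0
      + m 8 2 0 0 0 1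
      + m 9 2 0 1 0 0
      + m 10 0 1 1 0 0
      + m 10 1 0 0 1 0
      + m 11 0 0 0 0 1
      + m 12 0 0 1 0 0 := by
    simp only [hb, gW, Matrix.cons_val, a1, a2, a3, a4, a5, a6]
    clear ha hb hc
    simp only [hsq, hm, mul_pow, ← pow_mul]
    grind
  have b3 : b 3 =
      m 0 0 0 0 0 4
      + m 0 0 1 0 4 0
      + m 0 0 2 4 0 0
      + m 0 0 4 0 2 0
      + m 0 0 7 0 0 0
      + m 0 1 0 5 0 0
      + m 0 2 4 0 1 0
      + m 0 4 0 2 1 0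
      + m 0 4 1 0 2 0
      + m 0 4 4 0 0 0
      + m 0 5 2 1 0 0
      + m 0 6 0 2 0 0
      + m 0 7 0 0 0 1
      + m 0 8 1 0 0 0
      + m 1 0 0 4 1 0
      + m 1 2 5 0 0 0
      + m 1 4 1 2 0 0
      + m 1 4 2 0 1 0
      + m 2 0 1 4 0 0
      + m 2 0 6 0 0 0
      + m 2 1 4 1 0 0
      + m 2 4 0 0 2 0
      + m 3 0 4 0 1 0
      + m 4 0 0 0 1 2
      + m 4 0 0 4 0 0
      + m 4 1 0 1 2 0
      + m 4 1 0 2 0 1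
      + m 4 2 0 0 0 2
      + m 5 0 0 0 3 0
      + m 5 0 1 0 0 2
      + m 8 0 0 0 2 0
      + m 8 0 3 0 0 0
      + m 8 2 0 0 1 0
      + m 9 2 1 0 0 0
      + m 10 0 2 0 0 0
      + m 10 1 0 1 0 0
      + m 11 0 0 0 1 0
      + m 12 0 1 0 0 0 := by
    simp only [hb, gW, Matrix.cons_val, a1, a2, a3, a4, a5, a6]
    clear ha hb hc
    simp only [hsq, hm, mul_pow, ← pow_mul]
    grind
  have b4 : b 4 =
      m 0 0 0 4 0 1
      + m 0 1 0 0 4 0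
      + m 0 1 6 0 0 0
      + m 0 2 4 1 0 0
      + m 0 4 0 3 0 0
      + m 0 4 2 0 0 1
      + m 0 5 0 0 2 0
      + m 0 9 0 0 0 0
      + m 1 0 0 5 0 0
      + m 1 3 4 0 0 0
      + m 1 4 2 1 0 0
      + m 1 5 0 2 0 0
      + m 1 6 0 0 0 1
      + m 2 0 4 0 0 1
      + m 2 1 0 4 0 0
      + m 3 0 4 1 0 0
      + m 4 0 0 0 2 1
      + m 4 0 0 1 0 2
      + m 5 0 0 1 2 0
      + m 5 0 0 2 0 1
      + m 5 1 0 0 0 2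
      + m 8 1 2 0 0 0
      + m 8 2 0 1 0 0
      + m 9 3 0 0 0 0
      + m 10 0 0 0 0 1
      + m 11 0 0 1 0 0
      + m 12 1 0 0 0 0 := by
    simp only [hb, gW, Matrix.cons_val, a1, a2, a3, a4, a5, a6]
    clear ha hb hc
    simp only [hsq, hm, mul_pow, ← pow_mul]
    grind
  have b5 : b 5 =
      m 0 0 0 4 1 0
      + m 0 0 4 2 0 0
      + m 0 2 0 4 0 0
      + m 0 2 5 0 0 0
      + m 0 4 0 0 0 2
      + m 0 4 1 2 0 0
      + m 0 4 2 0 1 0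
      + m 1 0 0 0 4 0
      + m 1 0 6 0 0 0
      + m 1 4 0 0 2 0
      + m 1 8 0 0 0 0
      + m 2 0 4 0 1 0
      + m 3 0 0 4 0 0
      + m 4 0 0 0 3 0
      + m 4 0 1 0 0 2
      + m 8 0 0 2 0 0
      + m 8 2 1 0 0 0
      + m 9 0 2 0 0 0
      + m 10 0 0 0 1 0
      + m 13 0 0 0 0 0 := by
    simp only [hb, gW, Matrix.cons_val, a1, a2, a3, a4, a5, a6]
    clear ha hb hc
    simp only [hsq, hm, mul_pow, ← pow_mul]
    grind
  have b6 : b 6 =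
      m 0 0 0 5 0 0
      + m 0 3 4 0 0 0
      + m 0 4 2 1 0 0
      + m 0 5 0 2 0 0
      + m 0 6 0 0 0 1
      + m 2 0 4 1 0 0
      + m 4 0 0 1 2 0
      + m 4 0 0 2 0 1
      + m 4 1 0 0 0 2
      + m 8 3 0 0 0 0
      + m 10 0 0 1 0 0 := by
    simp only [hb, gW, Matrix.cons_val, a1, a2, a3, a4, a5, a6]
    clear ha hb hc
    simp only [hsq, hm, mul_pow, ← pow_mul]
    grind
  have c4 : c 4 =
      m 0 0 0 8 2 1
      + m 0 0 0 9 0 2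
      + m 0 0 8 4 0 1
      + m 0 1 0 0 0 8
      + m 0 1 2 0 8 0
      + m 0 1 4 8 0 0
      + m 0 1 8 0 4 0
      + m 0 1 14 0 0 0
      + m 0 2 0 1 8 0
      + m 0 2 12 1 0 0
      + m 0 4 0 8 0 1
      + m 0 4 8 3 0 0
      + m 0 4 10 0 0 1
      + m 0 5 8 0 2 0
      + m 0 8 0 0 0 5
      + m 0 8 0 7 0 0
      + m 0 8 2 4 0 1
      + m 0 8 4 0 2 1
      + m 0 8 4 1 0 2
      + m 0 9 0 4 2 0
      + m 0 9 2 0 4 0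
      + m 0 10 0 1 4 0
      + m 0 17 2 0 0 0
      + m 0 18 0 1 0 0
      + m 1 0 0 9 2 0
      + m 1 0 0 10 0 1
      + m 1 0 8 5 0 0
      + m 1 1 0 8 0 2
      + m 1 3 0 0 8 0
      + m 1 3 12 0 0 0
      + m 1 4 0 9 0 0
      + m 1 4 10 1 0 0
      + m 1 5 8 2 0 0
      + m 1 6 8 0 0 1
      + m 1 8 0 1 0 4
      + m 1 8 2 5 0 0
      + m 1 8 4 1 2 0
      + m 1 8 4 2 0 1
      + m 1 9 0 6 0 0
      + m 1 9 4 0 0 2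
      + m 1 10 0 4 0 1
      + m 1 11 0 0 4 0
      + m 1 12 0 0 0 3
      + m 1 19 0 0 0 0
      + m 2 0 0 0 8 1
      + m 2 0 12 0 0 1
      + m 2 1 8 4 0 0
      + m 2 5 0 8 0 0
      + m 2 8 0 0 4 1
      + m 2 9 0 0 0 4
      + m 2 16 0 0 0 1
      + m 3 0 0 1 8 0
      + m 3 0 12 1 0 0
      + m 3 8 0 1 4 0
      + m 3 16 0 1 0 0
      + m 4 0 8 0 2 1
      + m 4 0 8 1 0 2
      + m 4 1 0 0 8 0
      + m 4 1 2 8 0 0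
      + m 4 2 0 9 0 0
      + m 4 17 0 0 0 0
      + m 5 0 8 1 2 0
      + m 5 0 8 2 0 1
      + m 5 1 8 0 0 2
      + m 5 3 0 8 0 0
      + m 6 0 0 8 0 1
      + m 7 0 0 9 0 0
      + m 8 0 0 0 6 1
      + m 8 0 0 1 4 2
      + m 8 0 0 3 0 4
      + m 8 0 2 0 0 5
      + m 8 1 0 0 2 4
      + m 9 0 0 1 6 0
      + m 9 0 0 2 4 1
      + m 9 0 0 4 0 3
      + m 9 0 2 1 0 4
      + m 9 1 0 0 4 2
      + m 9 1 0 2 0 4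
      + m 9 2 0 0 0 5
      + m 16 0 0 4 0 1
      + m 16 1 0 0 4 0
      + m 16 1 6 0 0 0
      + m 16 2 4 1 0 0
      + m 16 4 0 3 0 0
      + m 16 4 2 0 0 1
      + m 16 5 0 0 2 0
      + m 16 9 0 0 0 0
      + m 17 0 0 5 0 0
      + m 17 3 4 0 0 0
      + m 17 4 2 1 0 0
      + m 17 5 0 2 0 0
      + m 17 6 0 0 0 1
      + m 18 0 4 0 0 1
      + m 18 1 0 4 0 0
      + m 19 0 4 1 0 0
      + m 20 0 0 0 2 1
      + m 20 0 0 1 0 2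
      + m 21 0 0 1 2 0
      + m 21 0 0 2 0 1
      + m 21 1 0 0 0 2
      + m 24 1 2 0 0 0
      + m 24 2 0 1 0 0
      + m 25 3 0 0 0 0
      + m 26 0 0 0 0 1
      + m 27 0 0 1 0 0
      + m 28 1 0 0 0 0 := by
    simp only [hc, gW, Matrix.cons_val, b2, b3, b4, b5, b6]
    clear ha hb hc
    simp only [hsq, hm, mul_pow, ← pow_mul]
    grind
  have c5 : c 5 =
      m 0 0 0 2 8 0
      + m 0 0 0 8 3 0
      + m 0 0 1 8 0 2
      + m 0 0 8 4 1 0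
      + m 0 0 12 2 0 0
      + m 0 2 1 0 8 0
      + m 0 2 8 4 0 0
      + m 0 2 13 0 0 0
      + m 0 4 0 8 1 0
      + m 0 4 8 0 0 2
      + m 0 4 9 2 0 0
      + m 0 4 10 0 1 0
      + m 0 6 0 8 0 0
      + m 0 8 0 0 1 4
      + m 0 8 0 2 4 0
      + m 0 8 0 4 0 2
      + m 0 8 1 6 0 0
      + m 0 8 2 4 1 0
      + m 0 8 4 0 3 0
      + m 0 8 5 0 0 2
      + m 0 10 0 0 0 4
      + m 0 10 1 0 4 0
      + m 0 16 0 2 0 0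
      + m 0 18 1 0 0 0
      + m 1 0 0 0 0 8
      + m 1 0 2 0 8 0
      + m 1 0 4 8 0 0
      + m 1 0 8 0 4 0
      + m 1 0 14 0 0 0
      + m 1 4 8 0 2 0
      + m 1 8 0 4 2 0
      + m 1 8 2 0 4 0
      + m 1 16 2 0 0 0
      + m 2 0 0 0 9 0
      + m 2 0 12 0 1 0
      + m 2 8 0 0 5 0
      + m 2 16 0 0 1 0
      + m 3 0 8 4 0 0
      + m 3 4 0 8 0 0
      + m 3 8 0 0 0 4
      + m 4 0 0 10 0 0
      + m 4 0 8 0 3 0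
      + m 4 0 9 0 0 2
      + m 4 2 1 8 0 0
      + m 5 0 0 0 8 0
      + m 5 0 2 8 0 0
      + m 5 16 0 0 0 0
      + m 6 0 0 8 1 0
      + m 8 0 0 0 0 6
      + m 8 0 0 0 7 0
      + m 8 0 1 0 4 2
      + m 8 0 1 2 0 4
      + m 8 0 2 0 1 4
      + m 9 0 0 0 2 4
      + m 16 0 0 4 1 0
      + m 16 0 4 2 0 0
      + m 16 2 0 4 0 0
      + m 16 2 5 0 0 0
      + m 16 4 0 0 0 2
      + m 16 4 1 2 0 0
      + m 16 4 2 0 1 0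
      + m 17 0 0 0 4 0
      + m 17 0 6 0 0 0
      + m 17 4 0 0 2 0
      + m 17 8 0 0 0 0
      + m 18 0 4 0 1 0
      + m 19 0 0 4 0 0
      + m 20 0 0 0 3 0
      + m 20 0 1 0 0 2
      + m 24 0 0 2 0 0
      + m 24 2 1 0 0 0
      + m 25 0 2 0 0 0
      + m 26 0 0 0 1 0
      + m 29 0 0 0 0 0 := by
    simp only [hc, gW, Matrix.cons_val, b2, b3, b4, b5, b6]
    clear ha hb hc
    simp only [hsq, hm, mul_pow, ← pow_mul]
    grind
  have c6 : c 6 =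
      m 0 0 0 9 2 0
      + m 0 0 0 10 0 1
      + m 0 0 8 5 0 0
      + m 0 1 0 8 0 2
      + m 0 3 0 0 8 0
      + m 0 3 12 0 0 0
      + m 0 4 0 9 0 0
      + m 0 4 10 1 0 0
      + m 0 5 8 2 0 0
      + m 0 6 8 0 0 1
      + m 0 8 0 1 0 4
      + m 0 8 2 5 0 0
      + m 0 8 4 1 2 0
      + m 0 8 4 2 0 1
      + m 0 9 0 6 0 0
      + m 0 9 4 0 0 2
      + m 0 10 0 4 0 1
      + m 0 11 0 0 4 0
      + m 0 12 0 0 0 3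
      + m 0 19 0 0 0 0
      + m 2 0 0 1 8 0
      + m 2 0 12 1 0 0
      + m 2 8 0 1 4 0
      + m 2 16 0 1 0 0
      + m 4 0 8 1 2 0
      + m 4 0 8 2 0 1
      + m 4 1 8 0 0 2
      + m 4 3 0 8 0 0
      + m 6 0 0 9 0 0
      + m 8 0 0 1 6 0
      + m 8 0 0 2 4 1
      + m 8 0 0 4 0 3
      + m 8 0 2 1 0 4
      + m 8 1 0 0 4 2
      + m 8 1 0 2 0 4
      + m 8 2 0 0 0 5
      + m 16 0 0 5 0 0
      + m 16 3 4 0 0 0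
      + m 16 4 2 1 0 0
      + m 16 5 0 2 0 0
      + m 16 6 0 0 0 1
      + m 18 0 4 1 0 0
      + m 20 0 0 1 2 0
      + m 20 0 0 2 0 1
      + m 20 1 0 0 0 2
      + m 24 3 0 0 0 0
      + m 26 0 0 1 0 0 := by
    simp only [hc, gW, Matrix.cons_val, b2, b3, b4, b5, b6]
    clear ha hb hc
    simp only [hsq, hm, mul_pow, ← pow_mul]
    grind
  unfold gD gP
  rw [a4, a5, a6, b4, b5, b6, c4, c5, c6]
  clear a4 a5 a6 b4 b5 b6 c4 c5 c6 a1 a2 a3 b2 b3 ha hb hc hsq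
  simp only [hm]
  grind

/-- The product of `X + Σ_{i∈u} t_i` over all subsets of a finite set is a linearized polynomial. -/
lemma gLin {A : Type*} [CommRing A] [CharP A 2] {ι : Type*} [DecidableEq ι] (t : ι → A)
    (s : Finset ι) : ∃ c : ℕ → A,
      ∏ u ∈ s.powerset, (X + C (∑ i ∈ u, t i)) =
        X ^ 2 ^ s.card + ∑ k ∈ range s.card, C (c k) * X ^ 2 ^ k := by
  induction s using Finset.induction_on with
  | empty => exact ⟨0, by simp⟩
  | insert a s ha ih =>
    obtain ⟨c, hc⟩ := ih
    set F : A[X] := X ^ 2 ^ s.card + ∑ k ∈ range s.card, C (c k) * X ^ 2 ^ k with hF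
    have hadd : ∀ (n : ℕ) (x y : A[X]), (x + y) ^ 2 ^ n = x ^ 2 ^ n + y ^ 2 ^ n :=
      fun n x y => add_pow_char_pow x y 2 n
    have h2 : ∏ u ∈ s.powerset, (X + C (∑ i ∈ insert a u, t i)) = F + C (F.eval (t a)) := by
      have h3 : ∏ u ∈ s.powerset, (X + C (∑ i ∈ insert a u, t i))
          = (∏ u ∈ s.powerset, (X + C (∑ i ∈ u, t i))).comp (X + C (t a)) := by
        rw [Polynomial.prod_comp]
        refine Finset.prod_congr rfl fun u hu => ?_
        have : a ∉ u := fun h => ha (Finset.mem_powerset.1 hu h)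
        rw [Finset.sum_insert this]
        simp [add_assoc]
      have hsc : ∀ q : A[X], (∑ k ∈ range s.card, C (c k) * X ^ 2 ^ k).comp q =
          ∑ k ∈ range s.card, (C (c k) * X ^ 2 ^ k).comp q :=
        fun q => map_sum (compRingHom q) _ _
      rw [h3, hc, hF]
      simp only [add_comp, pow_comp, X_comp, hsc, mul_comp, C_comp,
        hadd, mul_add, Finset.sum_add_distrib, eval_add, eval_pow, eval_X, eval_finsetSum,
        eval_mul, eval_C, map_add, map_sum, map_mul, map_pow]
      ring
    refine ⟨fun k => (if k = 0 then 0 else c (k - 1) ^ 2) +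
      F.eval (t a) * (if k = s.card then 1 else c k), ?_⟩
    rw [Finset.prod_powerset_insert ha, h2, hc]
    have hF2 : F ^ 2 = X ^ 2 ^ (s.card + 1) + ∑ k ∈ range s.card, C (c k ^ 2) * X ^ 2 ^ (k + 1) := by
      rw [hF, CharTwo.add_sq, CharTwo.sum_sq, ← pow_mul, ← pow_succ]
      congr 1
      refine Finset.sum_congr rfl fun k _ => ?_
      rw [mul_pow, ← pow_mul, ← pow_succ, C_pow]
    rw [mul_add, ← sq, hF2, Finset.card_insert_of_notMem ha]
    simp only [map_add, add_mul, Finset.sum_add_distrib]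
    rw [Finset.sum_range_succ' _ s.card]
    rw [Finset.sum_range_succ (fun k => C (eval (t a) F * (if k = s.card then 1 else c k)) * X ^ 2 ^ k)]
    have h4 : ∑ k ∈ range s.card, C (eval (t a) F * (if k = s.card then 1 else c k)) * X ^ 2 ^ k
        = C (eval (t a) F) * ∑ k ∈ range s.card, C (c k) * X ^ 2 ^ k := by
      rw [Finset.mul_sum]
      refine Finset.sum_congr rfl fun k hk => ?_
      rw [if_neg (Finset.mem_range.1 hk).ne, C_mul, mul_assoc]
    rw [h4]
    generalize eval (t a) F = z
    rw [hF]
    simp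
    ring

/-- The coefficient of `X^32` of a linearized monic multiple of `g` of degree 64. -/
lemma gCoeff {A : Type*} [CommRing A] [CharP A 2] [IsDomain A] (e2 e3 e4 e5 e6 e7 : A)
    (c : ℕ → A)
    (h : gPoly e2 e3 e4 e5 e6 e7 ∣ X ^ 2 ^ 6 + ∑ k ∈ range 6, C (c k) * X ^ 2 ^ k)
    (hD : gD e2 e3 (gW e2 e3 e4 e5 e6 e7 ![e7, e6, e5, e4, e3, e2, 0])
      (gW e2 e3 e4 e5 e6 e7 (gW e2 e3 e4 e5 e6 e7
        ![e7, e6, e5, e4, e3, e2, 0])) ≠ 0) :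
    c 5 = gP e2 e3 e4 e5 e6 e7 := by
  obtain ⟨v, hv⟩ : ∃ v : Fin 7 → A, v = ![e7, e6, e5, e4, e3, e2, 0] := ⟨_, rfl⟩
  obtain ⟨a, ha⟩ : ∃ a, a = gW e2 e3 e4 e5 e6 e7 v := ⟨_, rfl⟩
  obtain ⟨b, hb⟩ : ∃ b, b = gW e2 e3 e4 e5 e6 e7 a := ⟨_, rfl⟩
  obtain ⟨d, hd⟩ : ∃ d, d = gW e2 e3 e4 e5 e6 e7 b := ⟨_, rfl⟩
  have hneg : ∀ x : A[X], -x = x := fun x => CharTwo.neg_eq x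
  have h8 : gPoly e2 e3 e4 e5 e6 e7 ∣ X ^ 8 - ∑ j : Fin 7, C (v j) * X ^ (j.val + 1) := by
    refine ⟨1, ?_⟩
    rw [sub_eq_add_neg, hneg, hv, gPoly]
    simp [Fin.sum_univ_seven]
    ring
  have h16 := gStep e2 e3 e4 e5 e6 e7 v _ h8
  rw [← ha, ← pow_mul] at h16
  have h32 := gStep e2 e3 e4 e5 e6 e7 a _ h16
  rw [← hb, ← pow_mul] at h32
  have h64 := gStep e2 e3 e4 e5 e6 e7 b _ h32
  rw [← hd, ← pow_mul] at h64
  norm_num at h16 h32 h64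
  obtain ⟨r, hr⟩ : ∃ r : Fin 7 → A, r = fun j => d j + c 5 * b j + c 4 * a j + c 3 * v j
      + ![c 0, c 1, 0, c 2, 0, 0, 0] j := ⟨_, rfl⟩
  have hdvd : gPoly e2 e3 e4 e5 e6 e7 ∣ ∑ j : Fin 7, C (r j) * X ^ (j.val + 1) := by
    have := h.sub (((h64.add (h32.mul_left (C (c 5)))).add (h16.mul_left (C (c 4)))).add
      (h8.mul_left (C (c 3))))
    convert this using 1
    simp [Fin.sum_univ_seven, hr, Finset.sum_range_succ]
    ring
  have hmon : (gPoly e2 e3 e4 e5 e6 e7).degree = 8 ∧ (gPoly e2 e3 e4 e5 e6 e7).Monic := by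
    constructor
    · unfold gPoly; compute_degree!
    · unfold gPoly; monicity!
  have hz : ∑ j : Fin 7, C (r j) * X ^ (j.val + 1) = 0 := by
    by_contra hne
    refine hmon.2.not_dvd_of_degree_lt hne ?_ hdvd
    rw [hmon.1]
    refine lt_of_le_of_lt (b := ((7 : ℕ) : WithBot ℕ)) ?_ (by norm_cast)
    refine (degree_sum_le _ _).trans (Finset.sup_le ?_)
    intro j _
    refine (degree_C_mul_X_pow_le _ _).trans ?_
    exact_mod_cast (by omega : j.val + 1 ≤ 7)
  have hr0 : ∀ j : Fin 7, r j = 0 := by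
    intro j
    have := congrArg (fun p => coeff p (j.val + 1)) hz
    simp only [finsetSum_coeff, coeff_C_mul, coeff_X_pow, coeff_zero] at this
    rw [Finset.sum_eq_single j] at this
    · simpa using this
    · intro i _ hij
      have : j.val + 1 ≠ i.val + 1 := fun h => hij (Fin.ext (by omega))
      rw [if_neg this, mul_zero]
    · simp
  have r4 := hr0 4
  have r5 := hr0 5
  have r6 := hr0 6
  simp [hr, hv] at r4 r5 r6
  have cert := gCert e2 e3 e4 e5 e6 e7 a b d (by rw [ha, hv]) hb hd
  have e1 : gD e2 e3 a b * c 5 = gD e2 e3 a d := by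
    unfold gD
    clear cert hr0 hz hdvd h8 h16 h32 h64 hd hb ha hv hr h hD hmon
    generalize c 5 = c5 at *
    generalize c 4 = c4 at *
    generalize c 3 = c3 at *
    have h2 : (2 : A) = 0 := CharTwo.two_eq_zero
    linear_combination (e3 * a 5 + e2 * a 4) * r6 + e3 * a 6 * r5 + e2 * a 6 * r4
      - (e3 * (a 5 * d 6 + a 6 * d 5) + e2 * (a 4 * d 6 + a 6 * d 4) + c4 * a 6 * (e3 * a 5 + e2 * a 4) + e2 * e3 * a 6 * c3) * h2
  refine mul_left_cancel₀ ?_ (e1.trans cert.symm)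
  rw [hb, ha, hv]
  exact hD

/-- elementary symmetric functions of a family -/
def gE {A : Type*} [CommRing A] (t : Fin 7 → A) (k : ℕ) : A :=
  ∑ s ∈ powersetCard k univ, ∏ i ∈ s, t i

lemma gE_map {A B : Type*} [CommRing A] [CommRing B] (f : A →+* B) (t : Fin 7 → A) (k : ℕ) :
    f (gE t k) = gE (fun i => f (t i)) k := by
  simp [gE, map_sum, map_prod]

lemma gE_coeff {A : Type*} [CommRing A] (t : Fin 7 → A) (k : ℕ) (hk : k ≤ 7) :
    (∏ i, (X + C (t i))).coeff k = gE t (7 - k) := by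
  rw [Finset.prod_X_add_C_coeff _ _ (by simpa using hk)]
  simp [gE]

lemma gFact {A : Type*} [CommRing A] [Nontrivial A] (t : Fin 7 → A) (h : ∑ i, t i = 0) :
    gPoly (gE t 2) (gE t 3) (gE t 4) (gE t 5) (gE t 6) (gE t 7) = X * ∏ i, (X + C (t i)) := by
  have hdeg : (∏ i, (X + C (t i))).natDegree < 8 := by
    rw [natDegree_prod_of_monic _ _ (fun i _ => monic_X_add_C _)]
    simp
  have h0 : gE t 0 = 1 := by simp [gE]
  have h1 : gE t 1 = 0 := by simpa [gE, powersetCard_one] using h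
  rw [as_sum_range' _ 8 hdeg]
  simp only [Finset.sum_range_succ, Finset.sum_range_zero, ← C_mul_X_pow_eq_monomial]
  rw [gE_coeff t 0 (by norm_num), gE_coeff t 1 (by norm_num), gE_coeff t 2 (by norm_num),
    gE_coeff t 3 (by norm_num), gE_coeff t 4 (by norm_num), gE_coeff t 5 (by norm_num),
    gE_coeff t 6 (by norm_num), gE_coeff t 7 (by norm_num)]
  simp [h0, h1, gPoly]
  ring

lemma gProd {A : Type*} [CommRing A] [CharP A 2] (t : Fin 7 → A) (h : ∑ i, t i = 0) :
    X * ∏ s ∈ (univ : Finset (Fin 7)).powerset.filter (fun s => s.card ≠ 0 ∧ Even s.card),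
      (X + C (∑ i ∈ s, t i)) =
    ∏ u ∈ ((univ : Finset (Fin 7)).erase 6).powerset, (X + C (∑ i ∈ u, t i)) := by
  have hcompl : ∀ s : Finset (Fin 7), ∑ i ∈ sᶜ, t i = ∑ i ∈ s, t i := by
    intro s
    have := Finset.sum_add_sum_compl s t
    rw [h] at this
    exact ((CharTwo.add_eq_zero).1 this).symm
  have hI : (univ : Finset (Fin 7)).powerset.filter (fun s => Even s.card) =
      insert ∅ ((univ : Finset (Fin 7)).powerset.filter (fun s => s.card ≠ 0 ∧ Even s.card)) := by
    ext s
    rcases s.eq_empty_or_nonempty with rfl | hs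
    · simp
    · simp [hs.ne_empty]
  have h1 : X * ∏ s ∈ (univ : Finset (Fin 7)).powerset.filter
        (fun s => s.card ≠ 0 ∧ Even s.card), (X + C (∑ i ∈ s, t i)) =
      ∏ s ∈ (univ : Finset (Fin 7)).powerset.filter (fun s => Even s.card),
        (X + C (∑ i ∈ s, t i)) := by
    rw [hI, Finset.prod_insert (by simp)]
    simp
  rw [h1]
  have hpar : ∀ s : Finset (Fin 7), Even sᶜ.card ↔ ¬ Even s.card := by
    intro s
    have h7 : s.card ≤ 7 := by simpa using s.card_le_univ
    rw [Finset.card_compl, Fintype.card_fin, Nat.even_sub h7]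
    have : ¬ Even 7 := by decide
    simp only [this, false_iff]
  refine Finset.prod_nbij' (fun s => if (6 : Fin 7) ∈ s then sᶜ else s)
    (fun u => if Even u.card then u else uᶜ) ?_ ?_ ?_ ?_ ?_
  · intro s hs
    rw [Finset.mem_powerset, Finset.subset_erase]
    refine ⟨Finset.subset_univ _, ?_⟩
    by_cases h6 : (6 : Fin 7) ∈ s
    · rw [if_pos h6, Finset.mem_compl]
      exact fun h => h h6
    · rwa [if_neg h6]
  · intro u hu
    by_cases he : Even u.card
    · simp [he]
    · simp [he, hpar]
  · intro s hs
    have he : Even s.card := (Finset.mem_filter.1 hs).2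
    by_cases h6 : (6 : Fin 7) ∈ s
    · simp [h6, hpar, he]
    · simp [h6, he]
  · intro u hu
    have h6 : (6 : Fin 7) ∉ u := fun h => by
      simpa using Finset.mem_powerset.1 hu h
    by_cases he : Even u.card
    · simp [h6, he]
    · simp [h6, he]
  · intro s hs
    by_cases h6 : (6 : Fin 7) ∈ s
    · simp only [h6, if_true, hcompl]
    · simp only [h6, if_false]

lemma gMain {A : Type*} [CommRing A] [CharP A 2] [IsDomain A] (t : Fin 7 → A) (h : ∑ i, t i = 0)
    (e2 e3 e4 e5 e6 e7 : A) (h2 : e2 = gE t 2) (h3 : e3 = gE t 3) (h4 : e4 = gE t 4)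
    (h5 : e5 = gE t 5) (h6 : e6 = gE t 6) (h7 : e7 = gE t 7)
    (hD : gD e2 e3 (gW e2 e3 e4 e5 e6 e7 ![e7, e6, e5, e4, e3, e2, 0])
      (gW e2 e3 e4 e5 e6 e7 (gW e2 e3 e4 e5 e6 e7
        ![e7, e6, e5, e4, e3, e2, 0])) ≠ 0) :
    ∑ u ∈ powersetCard 32 ((univ : Finset (Fin 7)).powerset.filter
      (fun s => s.card ≠ 0 ∧ Even s.card)), ∏ s ∈ u, ∑ i ∈ s, t i
      = gP e2 e3 e4 e5 e6 e7 := by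
  obtain ⟨c, hc⟩ := gLin t ((univ : Finset (Fin 7)).erase 6)
  have hcard : ((univ : Finset (Fin 7)).erase 6).card = 6 := by simp
  rw [hcard, ← gProd t h] at hc
  have hcompl : ∀ s : Finset (Fin 7), ∑ i ∈ sᶜ, t i = ∑ i ∈ s, t i := by
    intro s
    have := Finset.sum_add_sum_compl s t
    rw [h] at this
    exact ((CharTwo.add_eq_zero).1 this).symm
  rw [← gCoeff e2 e3 e4 e5 e6 e7 c ?_ hD]
  · have hI : ((univ : Finset (Fin 7)).powerset.filter
      (fun s => s.card ≠ 0 ∧ Even s.card)).card = 63 := by rfl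
    have := congrArg (fun p => coeff p (31 + 1)) hc
    simp only [coeff_X_mul] at this
    rw [Finset.prod_X_add_C_coeff _ _ (by rw [hI]; norm_num), hI] at this
    rw [this]
    simp [Finset.sum_range_succ, coeff_X_pow]
  · rw [← hc, h2, h3, h4, h5, h6, h7, gFact t h]
    refine mul_dvd_mul_left _ ?_
    have : ∏ i, (X + C (t i)) = ∏ s ∈ (univ : Finset (Fin 7)).image (fun i => ({i}ᶜ : Finset (Fin 7))),
        (X + C (∑ i ∈ s, t i)) := by
      rw [Finset.prod_image]
      · simp [hcompl]
      · intro i _ j _ hij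
        simpa using hij
    rw [this]
    refine Finset.prod_dvd_prod_of_subset _ _ _ ?_
    intro s hs
    obtain ⟨i, _, rfl⟩ := Finset.mem_image.1 hs
    simp [Finset.card_compl]
    decide

lemma gW_map {A B : Type*} [CommRing A] [CommRing B] (f : A →+* B) (e2 e3 e4 e5 e6 e7 : A)
    (v : Fin 7 → A) : (fun j => f (gW e2 e3 e4 e5 e6 e7 v j)) =
      gW (f e2) (f e3) (f e4) (f e5) (f e6) (f e7) (fun j => f (v j)) := by
  funext j
  fin_cases j <;> simp [gW]

lemma gD_map {A B : Type*} [CommRing A] [CommRing B] (f : A →+* B) (e2 e3 : A)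
    (a b : Fin 7 → A) : f (gD e2 e3 a b) = gD (f e2) (f e3) (fun j => f (a j)) (fun j => f (b j)) := by
  simp [gD]

lemma gRoots : ∃ r : Fin 7 → AlgebraicClosure (ZMod 2), gE r 1 = 0 ∧ gE r 2 = 0 ∧ gE r 3 = 1 ∧
    gE r 4 = 0 ∧ gE r 5 = 1 ∧ gE r 6 = 0 ∧ gE r 7 = 0 := by
  set K := AlgebraicClosure (ZMod 2)
  have : CharP K 2 := charP_of_injective_algebraMap (algebraMap (ZMod 2) K).injective 2
  set p : K[X] := X ^ 7 + X ^ 4 + X ^ 2 with hp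
  have hdeg : p.natDegree = 7 := by rw [hp]; compute_degree!
  have hm : p.Monic := by rw [hp]; monicity!
  have hs : p.Splits := IsAlgClosed.splits p
  have hcard : p.roots.toList.length = 7 := by
    rw [Multiset.length_toList, ← hs.natDegree_eq_card_roots, hdeg]
  obtain ⟨r, hr⟩ : ∃ r : Fin 7 → K, (univ : Finset (Fin 7)).val.map r = p.roots := by
    refine ⟨fun i => p.roots.toList.get (i.cast hcard.symm), ?_⟩
    rw [Fin.univ_val_map]
    conv_rhs => rw [← Multiset.coe_toList p.roots]
    congr 1
    apply List.ext_get
    · simp [hcard]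
    · intro n h1 h2
      simp only [List.get_eq_getElem, List.getElem_ofFn, Fin.val_cast]
  have hprod : ∏ i, (X + C (r i)) = p := by
    conv_rhs => rw [hs.eq_prod_roots_of_monic hm, ← hr]
    rw [Multiset.map_map]
    simp only [Finset.prod, Function.comp_def, CharTwo.sub_eq_add]
  refine ⟨r, ?_⟩
  have key : ∀ k, k ≤ 7 → gE r (7 - k) = p.coeff k := fun k hk => by rw [← hprod, gE_coeff r k hk]
  refine ⟨(key 6 (by norm_num)).trans ?_, (key 5 (by norm_num)).trans ?_,
    (key 4 (by norm_num)).trans ?_, (key 3 (by norm_num)).trans ?_,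
    (key 2 (by norm_num)).trans ?_, (key 1 (by norm_num)).trans ?_,
    (key 0 (by norm_num)).trans ?_⟩ <;> simp [hp, coeff_X_pow]

end Polynomial

/-- The seven roots in `𝔽₂[t₁,…,t₆]`, the last one being the sum of the others. -/
noncomputable def gT : Fin 7 → MvPolynomial (Fin 6) (ZMod 2) :=
  Fin.snoc (α := fun _ => MvPolynomial (Fin 6) (ZMod 2)) X (∑ i, X i)

lemma gT_sum : ∑ i, gT i = 0 := by
  rw [Fin.sum_univ_castSucc]
  simp only [gT, Fin.snoc_castSucc, Fin.snoc_last]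
  exact CharTwo.add_self_eq_zero _

lemma mem_span_of_map_eq_zero (p : MvPolynomial (Fin 7) (ZMod 2)) (hp : aeval gT p = 0) :
    p ∈ Ideal.span {e 1} := by
  set I := Ideal.span {e 1}
  have key : ((Ideal.Quotient.mkₐ (ZMod 2) I).comp
      (aeval (fun i : Fin 6 => (X i.castSucc : MvPolynomial (Fin 7) (ZMod 2))))).comp (aeval gT)
      = Ideal.Quotient.mkₐ (ZMod 2) I := by
    apply MvPolynomial.algHom_ext
    intro i
    refine Fin.lastCases ?_ (fun i => ?_) i
    · simp only [AlgHom.comp_apply, aeval_X, gT, Fin.snoc_last, map_sum]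
      rw [← map_sum]
      refine Ideal.Quotient.eq.2 ?_
      have : e 1 = ∑ i : Fin 6, (X i.castSucc : MvPolynomial (Fin 7) (ZMod 2)) - X (Fin.last 6) := by
        rw [e, esymm_one, Fin.sum_univ_castSucc, CharTwo.sub_eq_add]
      rw [← this]
      exact Ideal.subset_span rfl
    · simp [gT]
  have := congrArg (fun f => f p) key
  simp only [AlgHom.comp_apply, hp, map_zero] at this
  exact Ideal.Quotient.eq_zero_iff_mem.1 this.symm

lemma gQ : homogeneousComponent 32 Q = ∑ u ∈ powersetCard 32
    ((univ : Finset (Fin 7)).powerset.filter (fun s => s.card ≠ 0 ∧ Even s.card)),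
      ∏ s ∈ u, ∑ i ∈ s, X i := by
  rw [Q, Finset.prod_one_add, map_sum, Finset.powersetCard_eq_filter, Finset.sum_filter]
  refine Finset.sum_congr rfl fun u _ => ?_
  have hu : (∏ s ∈ u, ∑ i ∈ s, (X i : MvPolynomial (Fin 7) (ZMod 2))).IsHomogeneous u.card := by
    have := IsHomogeneous.prod u (fun s => ∑ i ∈ s, (X i : MvPolynomial (Fin 7) (ZMod 2)))
      (fun _ => 1) (fun s _ => IsHomogeneous.sum _ _ _ fun i _ => isHomogeneous_X _ i)
    simpa using this
  rw [homogeneousComponent_of_mem hu]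
  simp only [eq_comm]

lemma gT_e (k : ℕ) : aeval gT (e k) = Polynomial.gE gT k := by
  simp [e, esymm, Polynomial.gE, map_sum, map_prod]

lemma gNe : Polynomial.gE gT 1 = 0 := by
  simpa [Polynomial.gE, powersetCard_one] using gT_sum


/-- the degree-32 homogeneous component of `Q` is congruent to the
displayed polynomial in `e₂,…,e₇` modulo the ideal `(e₁)`; this is the paper's
`c₃₂(1 ⊕ λ² ⊕ λ⁴ ⊕ λ⁶)` for `SU(7)`. -/
theorem c32_spinrep_plus_SU7 :
    homogeneousComponent 32 Q -
      (e 3 * e 5 ^ 3 * e 7 ^ 2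
        + e 5 ^ 5 * e 7
        + e 5 ^ 4 * e 6 ^ 2
        + e 2 ^ 3 * e 5 * e 7 ^ 3
        + e 2 ^ 2 * e 3 * e 5 * e 6 * e 7 ^ 2
        + e 2 ^ 2 * e 4 * e 5 ^ 2 * e 7 ^ 2
        + e 2 ^ 2 * e 5 ^ 3 * e 6 * e 7
        + e 2 * e 3 ^ 3 * e 7 ^ 3
        + e 3 ^ 4 * e 6 * e 7 ^ 2
        + e 3 ^ 3 * e 4 * e 5 * e 7 ^ 2
        + e 3 ^ 3 * e 5 ^ 2 * e 6 * e 7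
        + e 2 ^ 4 * e 3 * e 7 ^ 3
        + e 2 ^ 4 * e 5 ^ 2 * e 7 ^ 2
        + e 2 ^ 4 * e 6 ^ 4
        + e 2 ^ 3 * e 3 * e 4 * e 5 * e 7 ^ 2
        + e 2 ^ 3 * e 3 * e 5 ^ 2 * e 6 * e 7
        + e 2 ^ 2 * e 3 ^ 3 * e 5 * e 7 ^ 2
        + e 2 ^ 2 * e 3 ^ 3 * e 6 ^ 2 * e 7
        + e 2 ^ 2 * e 3 ^ 2 * e 4 ^ 2 * e 7 ^ 2
        + e 2 ^ 2 * e 3 ^ 2 * e 4 * e 5 * e 6 * e 7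
        + e 2 ^ 2 * e 3 ^ 2 * e 5 ^ 3 * e 7
        + e 2 ^ 2 * e 3 ^ 2 * e 5 ^ 2 * e 6 ^ 2
        + e 2 * e 3 ^ 4 * e 4 * e 7 ^ 2
        + e 2 * e 3 ^ 4 * e 5 * e 6 * e 7
        + e 3 ^ 6 * e 7 ^ 2
        + e 3 ^ 5 * e 4 * e 6 * e 7
        + e 3 ^ 4 * e 4 ^ 2 * e 5 * e 7
        + e 3 ^ 4 * e 4 ^ 2 * e 6 ^ 2
        + e 3 ^ 4 * e 5 ^ 4
        + e 4 ^ 8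
        + e 2 ^ 16)
      ∈ Ideal.span {e 1} := by
  apply mem_span_of_map_eq_zero
  have hD : Polynomial.gD (Polynomial.gE gT 2) (Polynomial.gE gT 3)
      (Polynomial.gW (Polynomial.gE gT 2) (Polynomial.gE gT 3) (Polynomial.gE gT 4)
        (Polynomial.gE gT 5) (Polynomial.gE gT 6) (Polynomial.gE gT 7)
        ![Polynomial.gE gT 7, Polynomial.gE gT 6, Polynomial.gE gT 5, Polynomial.gE gT 4,
          Polynomial.gE gT 3, Polynomial.gE gT 2, 0])
      (Polynomial.gW (Polynomial.gE gT 2) (Polynomial.gE gT 3) (Polynomial.gE gT 4)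
        (Polynomial.gE gT 5) (Polynomial.gE gT 6) (Polynomial.gE gT 7)
        (Polynomial.gW (Polynomial.gE gT 2) (Polynomial.gE gT 3) (Polynomial.gE gT 4)
        (Polynomial.gE gT 5) (Polynomial.gE gT 6) (Polynomial.gE gT 7)
        ![Polynomial.gE gT 7, Polynomial.gE gT 6, Polynomial.gE gT 5, Polynomial.gE gT 4,
          Polynomial.gE gT 3, Polynomial.gE gT 2, 0])) ≠ 0 := by
    obtain ⟨r, r1, r2, r3, r4, r5, r6, r7⟩ := Polynomial.gRoots
    have : CharP (AlgebraicClosure (ZMod 2)) 2 :=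
      charP_of_injective_algebraMap (algebraMap (ZMod 2) (AlgebraicClosure (ZMod 2))).injective 2
    have hrs : ∑ i, r i = 0 := by simpa [Polynomial.gE, powersetCard_one] using r1
    obtain ⟨f, hf⟩ : ∃ f : MvPolynomial (Fin 6) (ZMod 2) →+* AlgebraicClosure (ZMod 2),
        (fun i => f (gT i)) = r := by
      refine ⟨(aeval (fun i : Fin 6 => r i.castSucc)).toRingHom, ?_⟩
      funext i
      refine Fin.lastCases ?_ (fun i => ?_) i
      · rw [Fin.sum_univ_castSucc] at hrs
        simp only [gT, Fin.snoc_last, map_sum]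
        simpa using CharTwo.add_eq_zero.1 hrs
      · simp [gT]
    intro h0
    have h1 := congrArg f h0
    rw [Polynomial.gD_map, Polynomial.gW_map, Polynomial.gW_map, Polynomial.gW_map] at h1
    simp only [Polynomial.gE_map, hf, r2, r3, r4, r5, r6, r7, map_zero] at h1
    have hv : (fun j => f ((![Polynomial.gE gT 7, Polynomial.gE gT 6, Polynomial.gE gT 5,
        Polynomial.gE gT 4, Polynomial.gE gT 3, Polynomial.gE gT 2, 0] : Fin 7 → _) j))
        = ![0, 0, 1, 0, 1, 0, 0] := by
      funext j
      fin_cases j <;> simp [Polynomial.gE_map, hf, r2, r3, r4, r5, r6, r7]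
    rw [hv] at h1
    simp [Polynomial.gD, Polynomial.gW] at h1
    rw [CharTwo.add_self_eq_zero, zero_add] at h1
    exact one_ne_zero h1
  have key := Polynomial.gMain gT gT_sum _ _ _ _ _ _ rfl rfl rfl rfl rfl rfl hD
  rw [map_sub, gQ, map_sum]
  simp only [map_prod, map_sum, aeval_X]
  rw [key, sub_eq_zero]
  simp only [map_add, map_mul, map_pow, gT_e, Polynomial.gP]
end
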